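/- (Bound on E[y^n_k y^n_{k'}], light-tail case.) Let φ : ℕ → ℝ with φ_i ≥ 0, φ_0 = 0, ∑_{i=1}^∞ φ_i = 1, and assume m := ∑_{i=1}^∞ i φ_i < ∞. Let (a_n)_{n≥1} satisfy 0 < a_n < 1 and n(1−a_n) → λ for some λ > 0. Let (ε_k)_{k≥0} be iid real random variables with E[ε_0] = 0 and E[ε_0²] = 1, and for each n define y^n_0 = ε_0 and y^n_k = ε_k + ∑_{i=1}^k a_n φ_i y^n_{k−i} for k ≥ 1. Then there exists c > 0 such that for every n ≥ 1 and all k, k' ≥ 0, E[y^n_k y^n_{k'}] ≤ c/(1−a_n). -/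

import Mathlib

open MeasureTheory ProbabilityTheory Filter Set

/-- Convolution powers of a sequence. -/
noncomputable def convPow (φ : ℕ → ℝ) : ℕ → ℕ → ℝ
  | 0 => fun i => if i = 0 then 1 else 0
  | (l + 1) => fun k => ∑ j ∈ Finset.range (k + 1), convPow φ l j * φ (k - j)

/-- ψ^a_i = ∑_{l=0}^∞ a^l (φ^{*l})_i. -/
noncomputable def psiSeq (a : ℝ) (φ : ℕ → ℝ) (i : ℕ) : ℝ :=
  ∑' l : ℕ, a ^ l * convPow φ l i

/-- Fourier transform of a sequence indexed by ℕ. -/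
noncomputable def fourierSeq (f : ℕ → ℝ) (z : ℝ) : ℂ :=
  ∑' k : ℕ, (f k : ℂ) * Complex.exp (-(2 * Real.pi * Complex.I * k * z))

/-- Mittag-Leffler function E_{α,α}. -/
noncomputable def mittagLeffler (α u : ℝ) : ℝ :=
  ∑' k : ℕ, u ^ k / Real.Gamma (α * k + α)

/-- f^{α,λ}. -/
noncomputable def mlDensity (α lam s : ℝ) : ℝ :=
  lam * s ^ (α - 1) * mittagLeffler α (-lam * s ^ α)

/-- F^{α,λ}. -/
noncomputable def mlCDF (α lam x : ℝ) : ℝ :=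
  ∫ s in (0:ℝ)..x, mlDensity α lam s

/-!
Unrolling the recursion gives the moving average `y_k = ∑_{j ≤ k} ψ_{k-j} ε_j`, where
`ψ = psiSeq a φ` solves the renewal equation `ψ = δ₀ + a φ * ψ`. As the noise is orthonormal in
`L²`, `E[y_k y_{k'}] = ∑_{j ≤ min k k'} ψ_{k-j} ψ_{k'-j}`. For `k ≥ 1` the renewal equation writes
`ψ_k` as a sub-convex combination of earlier values, so `0 ≤ ψ ≤ 1` and one factor may be dropped.
When `∑ φ ≤ C`, the `l`-th convolution power has mass at most `C ^ l`, and what is left is at most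
`∑_k ψ_k ≤ ∑_l (a C)^l = 1 / (1 - a C)`.
-/

section Renewal

open Finset.HasAntidiagonal (antidiagonal mem_antidiagonal)

variable {φ : ℕ → ℝ} {a C : ℝ}

lemma convPow_nonneg (hφ : ∀ i, 0 ≤ φ i) : ∀ l k, 0 ≤ convPow φ l k
  | 0, k => by simp only [convPow]; positivity
  | l + 1, k => Finset.sum_nonneg fun j _ => mul_nonneg (convPow_nonneg hφ l j) (hφ (k - j))

lemma sum_range_convPow_le_pow (hφ : ∀ i, 0 ≤ φ i) (hC : ∀ n, ∑ i ∈ Finset.range n, φ i ≤ C)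
    (l n : ℕ) : ∑ k ∈ Finset.range n, convPow φ l k ≤ C ^ l := by
  have hC0 : 0 ≤ C := by simpa using hC 0
  induction l with
  | zero =>
    simp only [convPow, Finset.sum_ite_eq', pow_zero]
    split_ifs <;> norm_num
  | succ l ih =>
    calc ∑ k ∈ Finset.range n, convPow φ (l + 1) k
        = ∑ j ∈ Finset.range n, convPow φ l j * ∑ i ∈ Finset.range (n - j), φ i := by
          simp only [convPow, Finset.mul_sum]
          exact Finset.sum_range_diag_flip n fun j i => convPow φ l j * φ i
      _ ≤ ∑ j ∈ Finset.range n, convPow φ l j * C := by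
          gcongr with j
          · exact convPow_nonneg hφ l j
          · exact hC (n - j)
      _ = (∑ j ∈ Finset.range n, convPow φ l j) * C := (Finset.sum_mul ..).symm
      _ ≤ C ^ (l + 1) := by rw [pow_succ]; gcongr

lemma convPow_le_pow (hφ : ∀ i, 0 ≤ φ i) (hC : ∀ n, ∑ i ∈ Finset.range n, φ i ≤ C) (l k : ℕ) :
    convPow φ l k ≤ C ^ l :=
  (Finset.single_le_sum (fun i _ => convPow_nonneg hφ l i) (Finset.self_mem_range_succ k)).trans
    (sum_range_convPow_le_pow hφ hC l (k + 1))

lemma summable_pow_mul_convPow (hφ : ∀ i, 0 ≤ φ i) (hC : ∀ n, ∑ i ∈ Finset.range n, φ i ≤ C)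
    (ha : 0 ≤ a) (haC : a * C < 1) (k : ℕ) : Summable fun l => a ^ l * convPow φ l k := by
  have hC0 : 0 ≤ C := by simpa using hC 0
  refine .of_nonneg_of_le (fun l => mul_nonneg (pow_nonneg ha l) (convPow_nonneg hφ l k))
    (fun l => ?_) (summable_geometric_of_lt_one (mul_nonneg ha hC0) haC)
  rw [mul_pow]
  exact mul_le_mul_of_nonneg_left (convPow_le_pow hφ hC l k) (pow_nonneg ha l)

lemma psiSeq_nonneg (hφ : ∀ i, 0 ≤ φ i) (ha : 0 ≤ a) (k : ℕ) : 0 ≤ psiSeq a φ k :=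
  tsum_nonneg fun l => mul_nonneg (pow_nonneg ha l) (convPow_nonneg hφ l k)

lemma sum_range_psiSeq_le (hφ : ∀ i, 0 ≤ φ i) (hC : ∀ n, ∑ i ∈ Finset.range n, φ i ≤ C)
    (ha : 0 ≤ a) (haC : a * C < 1) (n : ℕ) :
    ∑ k ∈ Finset.range n, psiSeq a φ k ≤ 1 / (1 - a * C) := by
  have hC0 : 0 ≤ C := by simpa using hC 0
  have hsum := summable_pow_mul_convPow hφ hC ha haC
  calc ∑ k ∈ Finset.range n, psiSeq a φ k
      = ∑' l, a ^ l * ∑ k ∈ Finset.range n, convPow φ l k := by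
        simp only [psiSeq, Finset.mul_sum]
        exact (Summable.tsum_finsetSum fun k _ => hsum k).symm
    _ ≤ ∑' l, (a * C) ^ l := by
        refine Summable.tsum_le_tsum (fun l => ?_) ?_
          (summable_geometric_of_lt_one (mul_nonneg ha hC0) haC)
        · rw [mul_pow]
          exact mul_le_mul_of_nonneg_left (sum_range_convPow_le_pow hφ hC l n) (pow_nonneg ha l)
        · simpa only [Finset.mul_sum] using summable_sum fun k _ => hsum k
    _ = 1 / (1 - a * C) := by
        rw [tsum_geometric_of_lt_one (mul_nonneg ha hC0) haC, one_div]

lemma psiSeq_renewal (hsum : ∀ k, Summable fun l => a ^ l * convPow φ l k) (k : ℕ) :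
    psiSeq a φ k = (if k = 0 then 1 else 0) +
      ∑ p ∈ antidiagonal k, a * φ p.1 * psiSeq a φ p.2 := by
  have hsucc (l : ℕ) : a ^ (l + 1) * convPow φ (l + 1) k =
      ∑ p ∈ antidiagonal k, a * φ p.1 * (a ^ l * convPow φ l p.2) := by
    simp only [convPow]
    rw [← Finset.Nat.sum_antidiagonal_eq_sum_range_succ fun j i => convPow φ l j * φ i,
      ← Finset.Nat.sum_antidiagonal_swap, Finset.mul_sum]
    exact Finset.sum_congr rfl fun p _ => by simp only [Prod.fst_swap, Prod.snd_swap]; ring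
  have hterm (p : ℕ × ℕ) : Summable fun l => a * φ p.1 * (a ^ l * convPow φ l p.2) :=
    (hsum p.2).mul_left _
  rw [psiSeq, (hsum k).tsum_eq_zero_add, tsum_congr hsucc,
    Summable.tsum_finsetSum fun p _ => hterm p]
  simp only [tsum_mul_left, psiSeq, convPow, pow_zero, one_mul]

lemma psiSeq_le_one (hφ : ∀ i, 0 ≤ φ i) (hφ0 : φ 0 = 0)
    (hC : ∀ n, ∑ i ∈ Finset.range n, φ i ≤ C) (ha : 0 ≤ a) (haC : a * C < 1) (k : ℕ) :
    psiSeq a φ k ≤ 1 := by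
  have hrenewal := psiSeq_renewal (summable_pow_mul_convPow hφ hC ha haC)
  induction k using Nat.strong_induction_on with
  | _ k ih =>
  obtain rfl | hk := eq_or_ne k 0
  · rw [hrenewal]
    simp [hφ0]
  calc psiSeq a φ k = ∑ p ∈ antidiagonal k, a * φ p.1 * psiSeq a φ p.2 := by
        rw [hrenewal, if_neg hk, zero_add]
    _ ≤ ∑ p ∈ antidiagonal k, a * φ p.1 := by
        refine Finset.sum_le_sum fun p hp => ?_
        obtain hp0 | hp0 := Nat.eq_zero_or_pos p.1
        · simp [hp0, hφ0]
        · exact mul_le_of_le_one_right (mul_nonneg ha (hφ p.1))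
            (ih p.2 (by have := mem_antidiagonal.1 hp; omega))
    _ = a * ∑ i ∈ Finset.range (k + 1), φ i := by
        rw [Finset.Nat.sum_antidiagonal_eq_sum_range_succ_mk, Finset.mul_sum]
    _ ≤ a * C := by gcongr; exact hC (k + 1)
    _ ≤ 1 := haC.le

lemma eq_sum_antidiagonal_of_renewal {R : Type*} [CommRing R] {f ψ e y : ℕ → R}
    (hψ : ∀ k, ψ k = (if k = 0 then 1 else 0) + ∑ p ∈ antidiagonal k, f p.1 * ψ p.2)
    (hy : ∀ k, y k = e k + ∑ p ∈ antidiagonal k, f p.1 * y p.2) (k : ℕ) :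
    y k = ∑ p ∈ antidiagonal k, e p.1 * ψ p.2 := by
  have hΨ : PowerSeries.mk ψ = 1 + PowerSeries.mk f * PowerSeries.mk ψ := by
    ext k
    simpa [PowerSeries.coeff_mul, PowerSeries.coeff_one] using hψ k
  have hY : PowerSeries.mk y = PowerSeries.mk e + PowerSeries.mk f * PowerSeries.mk y := by
    ext k
    simpa [PowerSeries.coeff_mul] using hy k
  have hYΨ : PowerSeries.mk y = PowerSeries.mk e * PowerSeries.mk ψ := by
    linear_combination PowerSeries.mk ψ * hY - PowerSeries.mk y * hΨ
  simpa [PowerSeries.coeff_mul] using congrArg (PowerSeries.coeff k) hYΨ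

lemma autoregression_eq_movingAverage {e y : ℕ → ℝ} (hφ0 : φ 0 = 0)
    (hsum : ∀ k, Summable fun l => a ^ l * convPow φ l k)
    (hy : ∀ k, y k = e k + ∑ i ∈ Finset.Icc 1 k, a * φ i * y (k - i)) (k : ℕ) :
    y k = ∑ j ∈ Finset.range (k + 1), psiSeq a φ (k - j) * e j := by
  have hy' (k : ℕ) : y k = e k + ∑ p ∈ antidiagonal k, a * φ p.1 * y p.2 := by
    rw [hy, Finset.Nat.sum_antidiagonal_eq_sum_range_succ_mk, Finset.range_eq_Ico,
      Finset.sum_eq_sum_Ico_succ_bot k.succ_pos, hφ0, mul_zero, zero_mul, zero_add]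
    rfl
  rw [eq_sum_antidiagonal_of_renewal (f := fun i => a * φ i) (psiSeq_renewal hsum) hy',
    Finset.Nat.sum_antidiagonal_eq_sum_range_succ_mk]
  exact Finset.sum_congr rfl fun j _ => mul_comm _ _

end Renewal

section Orthonormal

variable {Ω ι : Type*} [MeasurableSpace Ω] [DecidableEq ι] {P : Measure Ω} {X : ι → Ω → ℝ}

lemma integral_mul_eq_ite_of_iIndepFun_identDistrib (hX : iIndepFun X P) {i₀ : ι}
    (hid : ∀ i, IdentDistrib (X i) (X i₀) P P) (hmean : ∫ ω, X i₀ ω ∂P = 0)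
    (hvar : ∫ ω, X i₀ ω ^ 2 ∂P = 1) (i j : ι) :
    ∫ ω, X i ω * X j ω ∂P = if i = j then 1 else 0 := by
  split_ifs with hij
  · subst hij
    simpa only [← pow_two, hvar] using (hid i).sq.integral_eq
  · rw [(hX.indepFun hij).integral_fun_mul_eq_mul_integral
      (hid i).aemeasurable_fst.aestronglyMeasurable (hid j).aemeasurable_fst.aestronglyMeasurable,
      (hid i).integral_eq, hmean, zero_mul]

lemma integral_sum_mul_sum_eq_sum_inter (hL2 : ∀ i, MemLp (X i) 2 P)
    (horth : ∀ i j, ∫ ω, X i ω * X j ω ∂P = if i = j then 1 else 0)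
    (s t : Finset ι) (u v : ι → ℝ) :
    ∫ ω, (∑ i ∈ s, u i * X i ω) * (∑ j ∈ t, v j * X j ω) ∂P = ∑ i ∈ s ∩ t, u i * v i := by
  have hint (i j : ι) : Integrable (fun ω => u i * v j * (X i ω * X j ω)) P :=
    ((hL2 i).integrable_mul (hL2 j)).const_mul _
  have hexpand (ω : Ω) : (∑ i ∈ s, u i * X i ω) * (∑ j ∈ t, v j * X j ω) =
      ∑ i ∈ s, ∑ j ∈ t, u i * v j * (X i ω * X j ω) := by
    simp only [Finset.sum_mul_sum, mul_mul_mul_comm]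
  simp_rw [hexpand]
  rw [integral_finsetSum _ fun i _ => integrable_finsetSum _ fun j _ => hint i j]
  simp_rw [integral_finsetSum _ fun j _ => hint _ j, integral_const_mul, horth, mul_ite, mul_one,
    mul_zero, Finset.sum_ite_eq]
  exact Finset.sum_ite_mem s t fun i => u i * v i

end Orthonormal

theorem ar_covariance_bound_light_tail_general {Ω : Type*} [MeasurableSpace Ω] {P : Measure Ω}
    {φ : ℕ → ℝ} (hφ : ∀ i, 0 ≤ φ i) (hφ0 : φ 0 = 0) {C : ℝ}
    (hC : ∀ n, ∑ i ∈ Finset.range n, φ i ≤ C) {a : ℝ} (ha : 0 ≤ a) (haC : a * C < 1)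
    {ε : ℕ → Ω → ℝ} (hεL2 : ∀ k, MemLp (ε k) 2 P)
    (hεorth : ∀ i j, ∫ ω, ε i ω * ε j ω ∂P = if i = j then 1 else 0) {y : ℕ → Ω → ℝ}
    (hy : ∀ k ω, y k ω = ε k ω + ∑ i ∈ Finset.Icc 1 k, a * φ i * y (k - i) ω) (k k' : ℕ) :
    ∫ ω, y k ω * y k' ω ∂P ≤ 1 / (1 - a * C) := by
  have hψ0 := psiSeq_nonneg hφ ha
  have hψ1 := psiSeq_le_one hφ hφ0 hC ha haC
  have hmovingAverage (k : ℕ) (ω : Ω) :=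
    autoregression_eq_movingAverage (y := (y · ω)) hφ0 (summable_pow_mul_convPow hφ hC ha haC)
      (hy · ω) k
  calc ∫ ω, y k ω * y k' ω ∂P
      = ∑ j ∈ Finset.range (k + 1) ∩ Finset.range (k' + 1),
          psiSeq a φ (k - j) * psiSeq a φ (k' - j) := by
        simp_rw [hmovingAverage]
        exact integral_sum_mul_sum_eq_sum_inter hεL2 hεorth _ _ _ _
    _ ≤ ∑ j ∈ Finset.range (k + 1) ∩ Finset.range (k' + 1), psiSeq a φ (k - j) :=
        Finset.sum_le_sum fun j _ => mul_le_of_le_one_right (hψ0 _) (hψ1 _)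
    _ ≤ ∑ j ∈ Finset.range (k + 1), psiSeq a φ (k - j) :=
        Finset.sum_le_sum_of_subset_of_nonneg Finset.inter_subset_left fun _ _ _ => hψ0 _
    _ = ∑ j ∈ Finset.range (k + 1), psiSeq a φ j :=
        Finset.sum_range_reflect (psiSeq a φ) (k + 1)
    _ ≤ 1 / (1 - a * C) := sum_range_psiSeq_le hφ hC ha haC (k + 1)

/-- light-tail bound `E[y^n_k y^n_{k'}] ≤ c/(1−a_n)`. -/
theorem ar_covariance_bound_light_tail
    {Ω : Type*} [MeasurableSpace Ω] (P : Measure Ω) [IsProbabilityMeasure P]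
    (φ : ℕ → ℝ) (hφnn : ∀ i, 0 ≤ φ i) (hφ0 : φ 0 = 0) (hφsum : ∑' i : ℕ, φ i = 1)
    (m : ℝ) (hm : HasSum (fun i : ℕ => (i : ℝ) * φ i) m)
    (a : ℕ → ℝ) (ha : ∀ n, 1 ≤ n → 0 < a n ∧ a n < 1)
    (lam : ℝ) (hlam : 0 < lam)
    (haconv : Tendsto (fun n : ℕ => (n : ℝ) * (1 - a n)) atTop (nhds lam))
    -- the `ε_k` are iid, square integrable, centered with unit variance
    (ε : ℕ → Ω → ℝ) (hεmeas : ∀ k, Measurable (ε k))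
    (hεindep : iIndepFun ε P)
    (hεid : ∀ k, Measure.map (ε k) P = Measure.map (ε 0) P)
    (hεL2 : MemLp (ε 0) 2 P)
    (hεmean : ∫ ω, ε 0 ω ∂P = 0)
    (hεvar : ∫ ω, (ε 0 ω) ^ 2 ∂P = 1)
    (y : ℕ → ℕ → Ω → ℝ)
    (hy0 : ∀ n, y n 0 = ε 0)
    (hyrec : ∀ n k, 1 ≤ k → ∀ ω,
      y n k ω = ε k ω + ∑ i ∈ Finset.Icc 1 k, a n * φ i * y n (k - i) ω) :
    ∃ c > 0, ∀ n, 1 ≤ n → ∀ k k' : ℕ,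
      ∫ ω, y n k ω * y n k' ω ∂P ≤ c / (1 - a n) := by
  have hφs : Summable φ :=
    not_imp_comm.1 tsum_eq_zero_of_not_summable (hφsum.trans_ne one_ne_zero)
  have hφle (n : ℕ) : ∑ i ∈ Finset.range n, φ i ≤ 1 :=
    (hφs.sum_le_tsum _ fun i _ => hφnn i).trans_eq hφsum
  have hid (k : ℕ) : IdentDistrib (ε k) (ε 0) P P :=
    ⟨(hεmeas k).aemeasurable, (hεmeas 0).aemeasurable, hεid k⟩
  have hεorth := integral_mul_eq_ite_of_iIndepFun_identDistrib hεindep hid hεmean hεvar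
  have hy (n k : ℕ) (ω : Ω) :
      y n k ω = ε k ω + ∑ i ∈ Finset.Icc 1 k, a n * φ i * y n (k - i) ω := by
    obtain rfl | hk := Nat.eq_zero_or_pos k
    · simp [hy0]
    · exact hyrec n k hk ω
  refine ⟨1, one_pos, fun n hn k k' => ?_⟩
  simpa only [mul_one] using ar_covariance_bound_light_tail_general hφnn hφ0 hφle (ha n hn).1.le
    ((mul_one (a n)).trans_lt (ha n hn).2) (fun k => (hid k).memLp_iff.2 hεL2) hεorth (hy n) k k'
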